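/- Let v_{m,l} denote the pattern on the alphabet {1,2} consisting of m copies of 1, followed by one 2, followed by l copies of 1. For all integers m, l ≥ 0 with m+l ≥ 1, and all integers n ≥ 0 and k ≥ 0, the number of words in [k]^n avoiding v_{m,l} equals the number of words in [k]^n avoiding v_{m+l,0}; in other words, all patterns v_{m,l} with the same value of m+l are Wilf-equivalent. -/

import Mathlib

/-- A word `σ ∈ [k]^n` (encoded as `σ : Fin n → Fin k`) contains the pattern `τ`
(encoded as a list of natural numbers) if there is a strictly increasing choice of
positions on which `σ` is order-isomorphic to `τ`. -/
def WordContains {n k : ℕ} (σ : Fin n → Fin k) (τ : List ℕ) : Prop :=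
  ∃ f : Fin τ.length → Fin n, StrictMono f ∧
    ∀ a b : Fin τ.length,
      (σ (f a) < σ (f b) ↔ τ.get a < τ.get b) ∧
      (σ (f a) = σ (f b) ↔ τ.get a = τ.get b)

/-- `avoiders n k T` is the number of words in `[k]^n` that avoid every pattern in `T`,
i.e. `f_T(n,k)`. -/
noncomputable def avoiders (n k : ℕ) (T : Set (List ℕ)) : ℕ :=
  Nat.card {σ : Fin n → Fin k // ∀ τ ∈ T, ¬ WordContains σ τ}

/-- The pattern v_{m,l} = 1^m 2 1^l. -/
def vPattern (m l : ℕ) : List ℕ :=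
  List.replicate m 1 ++ 2 :: List.replicate l 1

/-!
Removing the smallest letter from a word that avoids `v_{m,l}` leaves a word on the remaining
positions that avoids `v_{m,l}`, and the set `S` of removed positions is constrained only by: no
position outside `S` has `m` elements of `S` before it and `l` after it. The number of avoiders thus
satisfies a recursion in `k` that involves `m` and `l` only through the number of such sets `S` of
each size. When the second parameter is positive, a position after `max S` is never constrained,
and `max S` itself counts for one element after every position below it; reversing the positions
below `max S` therefore turns the condition for `(m, l + 1)` into the one for `(l, m + 1)`. Hence
`v_{m,l+1}` and `v_{l,m+1}` are Wilf-equivalent, and reversing words turns `v_{l,m+1}` into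
`v_{m+1,l}`.
-/

open Finset

section Flanked

variable {α β : Type*} [LinearOrder α] [LinearOrder β] {m l : ℕ}

/-- The position `i` has at least `m` elements of `S` before it and at least `l` after it: it can
play the `2` of `v_{m,l}` against the `1`s in `S`. -/
def IsFlanked (m l : ℕ) (S : Finset α) (i : α) : Prop :=
  m ≤ #{j ∈ S | j < i} ∧ l ≤ #{j ∈ S | i < j}

theorem isFlanked_map (e : α ↪o β) (S : Finset α) (i : α) :
    IsFlanked m l (S.map e.toEmbedding) (e i) ↔ IsFlanked m l S i := by
  simp [IsFlanked, filter_map]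

theorem isFlanked_toDual (S : Finset α) (i : α) :
    IsFlanked m l (S.map OrderDual.toDual.toEmbedding) (OrderDual.toDual i) ↔
      IsFlanked l m S i := by
  simp [IsFlanked, filter_map, and_comm]

theorem not_isFlanked_succ_right {S : Finset α} {i : α} (hi : ∀ j ∈ S, j ≤ i) :
    ¬ IsFlanked m (l + 1) S i := by
  simp [IsFlanked, filter_eq_empty_iff.2 fun j hj => (hi j hj).not_gt]

theorem IsFlanked.of_orderEmbedding {N : ℕ} {p : Fin N} {S : Finset α} (f : Fin N ↪o α)
    (hf : ∀ x ≠ p, f x ∈ S) : IsFlanked p p.rev S (f p) := by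
  constructor
  · calc (p : ℕ) = #((Iio p).map f.toEmbedding) := by simp
      _ ≤ #{j ∈ S | j < f p} := card_le_card fun y hy => by
        obtain ⟨x, hx, rfl⟩ := mem_map.1 hy
        have hxp := mem_Iio.1 hx
        exact mem_filter.2 ⟨hf x hxp.ne, f.lt_iff_lt.2 hxp⟩
  · calc (p.rev : ℕ) = #((Ioi p).map f.toEmbedding) := by simp; omega
      _ ≤ #{j ∈ S | f p < j} := card_le_card fun y hy => by
        obtain ⟨x, hx, rfl⟩ := mem_map.1 hy
        have hpx := mem_Ioi.1 hx
        exact mem_filter.2 ⟨hf x hpx.ne', f.lt_iff_lt.2 hpx⟩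

theorem card_filter_lt_orderEmbOfFin (S : Finset α) {N : ℕ} (h : #S = N) (x : Fin N) :
    #{y ∈ S | y < S.orderEmbOfFin h x} = x := by
  have hbefore : {y ∈ S | y < S.orderEmbOfFin h x} = (Iio x).map (S.orderEmbOfFin h).toEmbedding :=
    calc {y ∈ S | y < S.orderEmbOfFin h x}
        = {y ∈ univ.map (S.orderEmbOfFin h).toEmbedding | y < S.orderEmbOfFin h x} := by
          rw [map_orderEmbOfFin_univ]
      _ = (Iio x).map (S.orderEmbOfFin h).toEmbedding := by
          rw [filter_map]
          congr 1
          ext y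
          simp
  rw [hbefore, card_map, Fin.card_Iio]

theorem IsFlanked.exists_orderEmbedding {N : ℕ} {p : Fin N} {S : Finset α} {i : α}
    (h : IsFlanked p p.rev S i) : ∃ f : Fin N ↪o α, f p = i ∧ ∀ x ≠ p, f x ∈ S := by
  obtain ⟨A, hA, hAcard⟩ := exists_subset_card_eq h.1
  obtain ⟨B, hB, hBcard⟩ := exists_subset_card_eq h.2
  simp only [subset_iff, mem_filter] at hA hB
  have hAB : Disjoint A B :=
    disjoint_left.2 fun x hxA hxB => (hA hxA).2.not_gt (hB hxB).2
  have hi : i ∉ A ∪ B := by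
    rw [mem_union, not_or]
    exact ⟨fun hiA => (hA hiA).2.false, fun hiB => (hB hiB).2.false⟩
  have hcard : #(insert i (A ∪ B)) = N := by
    rw [card_insert_of_notMem hi, card_union_of_disjoint hAB, hAcard, hBcard, Fin.val_rev]
    omega
  have hbefore : {y ∈ insert i (A ∪ B) | y < i} = A := by
    ext y
    simp only [mem_filter, mem_insert, mem_union]
    grind
  let f := (insert i (A ∪ B)).orderEmbOfFin hcard
  obtain ⟨q, hq⟩ : i ∈ Set.range f := by
    rw [range_orderEmbOfFin]
    exact mem_insert_self _ _
  obtain rfl : q = p := Fin.ext <|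
    calc (q : ℕ) = #{y ∈ insert i (A ∪ B) | y < f q} :=
          (card_filter_lt_orderEmbOfFin _ hcard q).symm
      _ = #A := by rw [hq, hbefore]
      _ = p := hAcard
  refine ⟨f, hq, fun x hx => ?_⟩
  have hxi : f x ≠ i := hq ▸ f.injective.ne hx
  have hmem : f x ∈ insert i (A ∪ B) := orderEmbOfFin_mem _ hcard x
  rcases mem_union.1 (mem_of_mem_insert_of_ne hmem hxi) with hxA | hxB
  exacts [(hA hxA).1, (hB hxB).1]

end Flanked

section InsertZeros

variable {α : Type*} [DecidableEq α] {k : ℕ}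

/-- The word over `Fin (k + 1)` with the smallest letter `0` exactly on `S` and the word `τ`, its
letters raised by one, on the remaining positions. It splits off the smallest letter of a word. -/
def insertZeros (S : Finset α) (τ : {x // x ∉ S} → Fin k) (x : α) : Fin (k + 1) :=
  if h : x ∈ S then 0 else (τ ⟨x, h⟩).succ

theorem insertZeros_eq_zero_iff {S : Finset α} {τ : {x // x ∉ S} → Fin k} {x : α} :
    insertZeros S τ x = 0 ↔ x ∈ S := by
  simp [insertZeros]

theorem insertZeros_apply_coe {S : Finset α} (τ : {x // x ∉ S} → Fin k) (x : {x // x ∉ S}) :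
    insertZeros S τ x = (τ x).succ := by
  simp [insertZeros, x.2]

theorem insertZeros_bijective [Finite α] : Function.Bijective
    fun p : (S : Finset α) × ({x // x ∉ S} → Fin k) => insertZeros p.1 p.2 := by
  constructor
  · rintro ⟨S, τ⟩ ⟨S', τ'⟩ h
    obtain rfl : S = S' := by
      ext x
      rw [← insertZeros_eq_zero_iff (τ := τ), ← insertZeros_eq_zero_iff (τ := τ')]
      exact Eq.congr_left (congrFun h x)
    obtain rfl : τ = τ' := by
      ext1 x
      rw [← Fin.succ_inj, ← insertZeros_apply_coe, ← insertZeros_apply_coe]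
      exact congrFun h x
    rfl
  · intro σ
    cases nonempty_fintype α
    refine ⟨⟨({x | σ x = 0} : Finset α), fun x => (σ x).pred (by simpa using x.2)⟩, ?_⟩
    ext1 x
    by_cases hx : σ x = 0 <;> simp [insertZeros, hx]

end InsertZeros

section Words

variable {α β ι : Type*} [LinearOrder α] [Fintype α] [LinearOrder β] [Fintype β] [LinearOrder ι]
  {k m l : ℕ}

/-- Avoidance of `v_{m,l}` by a word with positions in `α` and letters in `ι`: no position is
flanked by `m` and `l` occurrences of a smaller letter. Positions range over any finite linear
order, so that removing positions or reversing the order needs no renumbering. -/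
def AvoidsV (m l : ℕ) (σ : α → ι) : Prop :=
  ∀ a i, a < σ i → ¬ IsFlanked m l {j | σ j = a} i

theorem avoidsV_comp_orderIso (e : α ≃o β) (σ : β → ι) :
    AvoidsV m l (σ ∘ e) ↔ AvoidsV m l σ := by
  refine forall_congr' fun a => Iff.trans (forall_congr' fun i => ?_) e.surjective.forall.symm
  have hmap : ({j | (σ ∘ e) j = a} : Finset α).map e.toOrderEmbedding.toEmbedding =
      ({j | σ j = a} : Finset β) := by
    ext j
    simp [← e.eq_symm_apply]
  rw [← hmap]
  exact imp_congr_right fun _ => (isFlanked_map e.toOrderEmbedding _ i).symm.not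

theorem avoidsV_comp_ofDual (σ : α → ι) :
    AvoidsV m l (σ ∘ OrderDual.ofDual) ↔ AvoidsV l m σ := by
  refine forall_congr' fun a => Iff.trans (forall_congr' fun i => ?_)
    OrderDual.toDual.surjective.forall.symm
  have hmap : ({j | (σ ∘ OrderDual.ofDual) j = a} : Finset αᵒᵈ) =
      ({j | σ j = a} : Finset α).map OrderDual.toDual.toEmbedding := by
    ext j
    simp
  rw [hmap]
  exact imp_congr_right fun _ => (isFlanked_toDual (α := α) _ i).not

theorem vPattern_getElem {x : ℕ} (hx : x < (vPattern m l).length) :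
    (vPattern m l)[x] = if x = m then 2 else 1 := by
  simp only [vPattern, List.getElem_append, List.length_replicate, List.getElem_replicate,
    List.getElem_cons]
  grind

theorem wordContains_vPattern_iff {n : ℕ} (hml : 1 ≤ m + l) (σ : Fin n → Fin k) :
    WordContains σ (vPattern m l) ↔ ¬ AvoidsV m l σ := by
  have hlen : (vPattern m l).length = m + l + 1 := by simp [vPattern, Nat.add_assoc]
  let p : Fin (vPattern m l).length := ⟨m, by omega⟩
  have hrev : (p.rev : ℕ) = l := by simp [p, hlen]
  have hget (x : Fin (vPattern m l).length) : (vPattern m l)[(x : ℕ)] = if x = p then 2 else 1 := by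
    simp [vPattern_getElem, Fin.ext_iff, p]
  simp only [AvoidsV, not_forall, not_not]
  constructor
  · rintro ⟨f, hf, hσ⟩
    obtain ⟨z, hz⟩ : ∃ z, z ≠ p := by
      have : Nontrivial (Fin (vPattern m l).length) := Fin.nontrivial_iff_two_le.2 (by omega)
      exact exists_ne p
    refine ⟨σ (f z), f p, ?_, ?_⟩
    · simp [(hσ z p).1, hget, hz]
    · rw [← hrev]
      refine IsFlanked.of_orderEmbedding (p := p) (OrderEmbedding.ofStrictMono f hf) fun x hx => ?_
      simp [(hσ x z).2, hget, hx, hz]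
  · rintro ⟨a, i, ha, h⟩
    rw [← hrev] at h
    obtain ⟨f, rfl, hf⟩ := IsFlanked.exists_orderEmbedding (p := p) h
    have hfa (x) (hx : x ≠ p) : σ (f x) = a := by simpa using hf x hx
    refine ⟨f, f.strictMono, fun x y => ?_⟩
    by_cases hx : x = p <;> by_cases hy : y = p <;>
      simp [hget, hx, hy, hfa, ha, ha.le, ha.ne, ha.ne']

/-- The number of words over `[k]` with positions in `α` that avoid `v_{m,l}`; it depends on `α`
only through its size. -/
noncomputable def numAvoidingV (α : Type*) [LinearOrder α] [Fintype α] (k m l : ℕ) : ℕ :=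
  Nat.card {σ : α → Fin k // AvoidsV m l σ}

theorem numAvoidingV_congr (h : Fintype.card α = Fintype.card β) :
    numAvoidingV α k m l = numAvoidingV β k m l := by
  let e : α ≃o β :=
    (Fintype.orderIsoFinOfCardEq α h).symm.trans (Fintype.orderIsoFinOfCardEq β rfl)
  refine Nat.card_congr ((e.toEquiv.arrowCongr (Equiv.refl _)).subtypeEquiv fun σ => ?_)
  exact (avoidsV_comp_orderIso e.symm σ).symm

theorem numAvoidingV_comm : numAvoidingV α k m l = numAvoidingV α k l m :=
  calc numAvoidingV α k m l
      = numAvoidingV αᵒᵈ k m l := numAvoidingV_congr (Fintype.card_orderDual α).symm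
    _ = numAvoidingV α k l m := Nat.card_congr <|
        (OrderDual.toDual.symm.arrowCongr (Equiv.refl _)).subtypeEquiv fun σ =>
          avoidsV_comp_ofDual (σ ∘ OrderDual.toDual)

/-- `S` can be the set of positions of the smallest letter in a word avoiding `v_{m,l}`, every
position outside `S` carrying a larger letter. -/
def Admissible (m l : ℕ) (S : Finset α) : Prop :=
  ∀ i ∉ S, ¬ IsFlanked m l S i

theorem avoidsV_insertZeros (S : Finset α) (τ : {x // x ∉ S} → Fin k) :
    AvoidsV m l (insertZeros S τ) ↔ Admissible m l S ∧ AvoidsV m l τ := by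
  rw [AvoidsV, Fin.forall_fin_succ]
  refine and_congr ?_ (forall_congr' fun a => ?_)
  · simp only [Fin.pos_iff_ne_zero, ne_eq, insertZeros_eq_zero_iff, filter_univ_mem, Admissible]
  · have hpos : ({j | insertZeros S τ j = a.succ} : Finset α) =
        ({j | τ j = a} : Finset {x // x ∉ S}).map (OrderEmbedding.subtype (· ∉ S)).toEmbedding := by
      ext j
      by_cases hj : j ∈ S <;> simp [insertZeros, hj, eq_comm]
    rw [hpos]
    constructor
    · intro h i hi
      rw [← isFlanked_map (OrderEmbedding.subtype (· ∉ S))]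
      exact h i (by simpa [insertZeros_apply_coe] using hi)
    · intro h i hi
      have hiS : i ∉ S := fun hiS => by simp [insertZeros_eq_zero_iff.2 hiS] at hi
      rw [insertZeros_apply_coe τ ⟨i, hiS⟩, Fin.succ_lt_succ_iff] at hi
      exact (isFlanked_map (OrderEmbedding.subtype (· ∉ S)) _ ⟨i, hiS⟩).not.2 (h _ hi)

open Classical in
theorem numAvoidingV_alphabet_succ : numAvoidingV α (k + 1) m l =
    ∑ S : Finset α with Admissible m l S,
      numAvoidingV (Fin (Fintype.card α - #S)) k m l := by
  have card_filter_avoidsV (S : Finset α) :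
      #{τ : {x // x ∉ S} → Fin k | AvoidsV m l τ} =
        numAvoidingV (Fin (Fintype.card α - #S)) k m l :=
    calc #{τ : {x // x ∉ S} → Fin k | AvoidsV m l τ}
        = numAvoidingV {x // x ∉ S} k m l := by
          rw [numAvoidingV, Nat.card_eq_fintype_card, Fintype.card_subtype]
      _ = numAvoidingV (Fin (Fintype.card α - #S)) k m l := numAvoidingV_congr (by simp)
  simp_rw [← card_filter_avoidsV]
  rw [← card_sigma, numAvoidingV, Nat.card_eq_fintype_card, Fintype.card_subtype]
  refine (card_bijective _ insertZeros_bijective fun p => ?_).symm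
  simp [avoidsV_insertZeros]

end Words

section Reflection

variable {n m l : ℕ}

/-- The involution of the positions that reverses those below `M` and fixes the others. -/
def reflectBelow (M x : Fin n) : Fin n :=
  if x < M then ⟨M - 1 - x, by omega⟩ else x

theorem val_reflectBelow (M x : Fin n) :
    (reflectBelow M x : ℕ) = if (x : ℕ) < M then (M : ℕ) - 1 - x else x := by
  rw [reflectBelow, apply_ite Fin.val]
  rfl

theorem reflectBelow_of_le {M x : Fin n} (h : M ≤ x) : reflectBelow M x = x :=
  if_neg h.not_gt

theorem reflectBelow_involutive (M : Fin n) : Function.Involutive (reflectBelow M) := by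
  intro x
  ext
  grind [val_reflectBelow]

theorem reflectBelow_le_iff {M x : Fin n} : reflectBelow M x ≤ M ↔ x ≤ M := by
  grind [val_reflectBelow]

theorem isGreatest_image_reflectBelow {S : Finset (Fin n)} {M : Fin n}
    (hM : IsGreatest (S : Set (Fin n)) M) :
    IsGreatest (S.image (reflectBelow M) : Set (Fin n)) M := by
  constructor
  · exact mem_coe.2 (mem_image.2 ⟨M, hM.1, reflectBelow_of_le le_rfl⟩)
  · intro y hy
    obtain ⟨x, hx, rfl⟩ := mem_image.1 (mem_coe.1 hy)
    exact reflectBelow_le_iff.2 (hM.2 hx)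

theorem image_image_reflectBelow (S : Finset (Fin n)) (M : Fin n) :
    (S.image (reflectBelow M)).image (reflectBelow M) = S := by
  rw [image_image, (reflectBelow_involutive M).comp_self, image_id]

theorem card_filter_reflectBelow_lt {S : Finset (Fin n)} {M i : Fin n}
    (hM : IsGreatest (S : Set (Fin n)) M) (hi : i < M) :
    #{j ∈ S | reflectBelow M i < j} = #{j ∈ S.image (reflectBelow M) | j < i} + 1 := by
  have hfilter : {j ∈ S | reflectBelow M i < j} =
      insert M {j ∈ S | reflectBelow M j < i} := by
    ext j
    simp only [mem_filter, mem_insert]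
    have hle : j ∈ S → j ≤ M := fun h => hM.2 h
    have hMS : M ∈ S := mem_coe.1 hM.1
    grind [val_reflectBelow]
  have hMnot : M ∉ ({j ∈ S | reflectBelow M j < i} : Finset (Fin n)) := by
    simp [reflectBelow_of_le le_rfl, hi.le]
  rw [hfilter, card_insert_of_notMem hMnot, filter_image,
    card_image_of_injective _ (reflectBelow_involutive M).injective]

theorem isFlanked_image_reflectBelow {S : Finset (Fin n)} {M : Fin n}
    (hM : IsGreatest (S : Set (Fin n)) M) (i : Fin n) :
    IsFlanked l (m + 1) (S.image (reflectBelow M)) i ↔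
      IsFlanked m (l + 1) S (reflectBelow M i) := by
  have hM' := isGreatest_image_reflectBelow hM
  rcases lt_or_ge i M with hi | hi
  · have hi' : reflectBelow M i < M := by grind [val_reflectBelow]
    have hafter := card_filter_reflectBelow_lt hM' hi'
    rw [reflectBelow_involutive, image_image_reflectBelow] at hafter
    simp only [IsFlanked, hafter, card_filter_reflectBelow_lt hM hi, Nat.add_le_add_iff_right,
      and_comm]
  · rw [reflectBelow_of_le hi,
      iff_false_intro (not_isFlanked_succ_right fun j hj => (hM'.2 hj).trans hi),
      iff_false_intro (not_isFlanked_succ_right fun j hj => (hM.2 hj).trans hi)]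

theorem admissible_image_reflectBelow {S : Finset (Fin n)} {M : Fin n}
    (hM : IsGreatest (S : Set (Fin n)) M) :
    Admissible l (m + 1) (S.image (reflectBelow M)) ↔ Admissible m (l + 1) S := by
  refine (reflectBelow_involutive M).surjective.forall.trans (forall_congr' fun i => ?_)
  rw [isFlanked_image_reflectBelow hM, reflectBelow_involutive,
    (reflectBelow_involutive M).injective.mem_finset_image]

/-- Reversal of a set of positions below its maximum, which exchanges the roles of `m` and `l` in
`Admissible m (l + 1)`; the empty set is fixed. -/
def reflectBelowMax (S : Finset (Fin n)) : Finset (Fin n) :=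
  if h : S.Nonempty then S.image (reflectBelow (S.max' h)) else ∅

theorem reflectBelowMax_of_isGreatest {S : Finset (Fin n)} {M : Fin n}
    (hM : IsGreatest (S : Set (Fin n)) M) : reflectBelowMax S = S.image (reflectBelow M) := by
  have hS : S.Nonempty := ⟨M, hM.1⟩
  rw [reflectBelowMax, dif_pos hS, (S.isGreatest_max' hS).unique hM]

theorem reflectBelowMax_empty : reflectBelowMax (∅ : Finset (Fin n)) = ∅ := by
  simp [reflectBelowMax]

theorem reflectBelowMax_involutive :
    Function.Involutive (reflectBelowMax : Finset (Fin n) → Finset (Fin n)) := by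
  intro S
  obtain rfl | hS := S.eq_empty_or_nonempty
  · simp only [reflectBelowMax_empty]
  · have hM := S.isGreatest_max' hS
    rw [reflectBelowMax_of_isGreatest hM,
      reflectBelowMax_of_isGreatest (isGreatest_image_reflectBelow hM), image_image_reflectBelow]

theorem card_reflectBelowMax (S : Finset (Fin n)) : #(reflectBelowMax S) = #S := by
  obtain rfl | hS := S.eq_empty_or_nonempty
  · rw [reflectBelowMax_empty]
  · rw [reflectBelowMax_of_isGreatest (S.isGreatest_max' hS),
      card_image_of_injective _ (reflectBelow_involutive _).injective]

theorem admissible_reflectBelowMax (S : Finset (Fin n)) :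
    Admissible l (m + 1) (reflectBelowMax S) ↔ Admissible m (l + 1) S := by
  obtain rfl | hS := S.eq_empty_or_nonempty
  · simp [reflectBelowMax_empty, Admissible, not_isFlanked_succ_right]
  · have hM := S.isGreatest_max' hS
    rw [reflectBelowMax_of_isGreatest hM, admissible_image_reflectBelow hM]

open Classical in
theorem sum_admissible_swap_succ {A : Type*} [AddCommMonoid A] (g : ℕ → A) :
    ∑ S : Finset (Fin n) with Admissible m (l + 1) S, g #S =
      ∑ S : Finset (Fin n) with Admissible l (m + 1) S, g #S :=
  sum_equiv reflectBelowMax_involutive.toPerm (by simp [admissible_reflectBelowMax])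
    fun S _ => congrArg g (card_reflectBelowMax S).symm

end Reflection

theorem numAvoidingV_swap_succ (n k m l : ℕ) :
    numAvoidingV (Fin n) k m (l + 1) = numAvoidingV (Fin n) k l (m + 1) := by
  induction k generalizing n with
  | zero => simp [numAvoidingV, AvoidsV]
  | succ k ih =>
    simp only [numAvoidingV_alphabet_succ, ih]
    exact sum_admissible_swap_succ fun c =>
      numAvoidingV (Fin (Fintype.card (Fin n) - c)) k l (m + 1)

theorem numAvoidingV_eq_add_zero (n k m l : ℕ) :
    numAvoidingV (Fin n) k m l = numAvoidingV (Fin n) k (m + l) 0 := by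
  induction l generalizing m with
  | zero => rfl
  | succ l ih =>
    calc numAvoidingV (Fin n) k m (l + 1)
        = numAvoidingV (Fin n) k l (m + 1) := numAvoidingV_swap_succ n k m l
      _ = numAvoidingV (Fin n) k (m + 1) l := numAvoidingV_comm
      _ = numAvoidingV (Fin n) k (m + (l + 1)) 0 := by rw [ih, Nat.add_right_comm, Nat.add_assoc]

theorem avoiders_vPattern {m l : ℕ} (n k : ℕ) (hml : 1 ≤ m + l) :
    avoiders n k {vPattern m l} = numAvoidingV (Fin n) k m l := by
  simp [avoiders, numAvoidingV, wordContains_vPattern_iff hml]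

/-- All patterns v_{m,l} with the same value of m + l are Wilf-equivalent:
f_{v_{m,l}}(n,k) = f_{v_{m+l,0}}(n,k). -/
theorem avoid_vml_wilf_equiv (m l n k : ℕ) (hml : 1 ≤ m + l) :
    avoiders n k {vPattern m l} = avoiders n k {vPattern (m + l) 0} := by
  rw [avoiders_vPattern n k hml, avoiders_vPattern n k (show 1 ≤ m + l + 0 from hml)]
  exact numAvoidingV_eq_add_zero n k m l
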